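/- Assume that for some r > 1 and every ε > 0 the uniform r-complete convergence condition Σ_{n≥1} n^{r−1} sup_{k≥0} P_k(|Z_{k+n}^k/n − I| > ε) < ∞ holds for some I ∈ (0,∞), that ϱ_α ∈ (0,1) satisfies ϱ_α → 0 and |log ϱ_α|/|log α| → 0 as α → 0, and that k*_α satisfies k*_α → ∞ and |log α| + k*_α·log(1−ϱ_α) → +∞. Write Δ(α) = Δ(α,ϱ_α) and let T_α = T((1−α)/(ϱ_α α)) be the SR procedure. Then for every 1 ≤ ℓ ≤ r, as α → 0: for each fixed ν ≥ 0, E_ν[(T_α−ν)^ℓ | T_α>ν] ~ inf_{τ∈Δ(α)} E_ν[(τ−ν)^ℓ | τ>ν] ~ (|log α|/I)^ℓ, and sup_{0≤ν≤k*_α} E_ν[(T_α−ν)^ℓ | T_α>ν] ~ inf_{τ∈Δ(α)} sup_{0≤ν≤k*_α} E_ν[(τ−ν)^ℓ | τ>ν] ~ (|log α|/I)^ℓ. -/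

import Mathlib

/-!
Let `L = |log α|`. All four quantities lie between `inf_{τ ∈ Δ(α)} E_ν[(τ-ν)^ℓ | τ > ν]` for a
fixed `ν` and `sup_{ν ≤ k*_α} E_ν[(T_α-ν)^ℓ | T_α > ν]`, once `T_α ∈ Δ(α)` and `ν ≤ k*_α`. So it
suffices to bound the former from below (`eventually_le_iInf`) and the latter from above
(`eventually_iSup_le`) by `(L/I)^ℓ` up to factors tending to `1`.

*Membership* (`SR_mem_Delta`). Splitting `{T(h) ≤ k}` according to the value of `T(h)` and changing
measure gives `h P_∞(T(h) ≤ k) ≤ ∑_{j<k} P_j(T(h) ≤ k) ≤ k`; averaging over the geometric prior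
bounds the false alarm probability by `(1-ϱ)α/(1-α) ≤ α` as soon as `α ≤ ϱ_α`.

*Lower bound.* Every `τ ∈ Δ(α)` satisfies `P_∞(τ ≤ k) ≤ α(1-ϱ)^{-k}`. With `N ≈ t L/I`, `t < 1`,
change of measure on `F_{ν+N}` truncated at `Z ≤ (2-t) I N` gives
`P_ν(τ ≤ ν+N) ≤ e^{(2-t)IN} α (1-ϱ)^{-(ν+N)} + P_ν(Z_{ν+N}^ν/N > (2-t)I)`,
which tends to `0` uniformly in `τ` because `t(2-t) < 1` and `ϱ_α → 0`. Hence the `ℓ`-th moment of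
the delay is at least `N^ℓ (1-o(1))`.

*Upper bound.* As `R_n ≥ exp Z_n^ν` for `n > ν`, the event `T(h) > ν+n` forces
`Z_{ν+n}^ν < log h`, a large deviation when `n > log h/(I-ε)`. Summation by parts and the
`r`-complete convergence show that the `ℓ`-th moment is at most `(log h/(I-ε)+1)^ℓ + C`, with `C`
independent of `ν` and `h`, while `log h ~ L` for `h = (1-α)/(ϱ_α α)`. Finally
`P_ν(T_α > ν) = P_∞(T_α > ν) ≥ 1 - α(1-ϱ_α)^{-k*_α} → 1` uniformly in `ν ≤ k*_α`.
-/

open MeasureTheory Filter Set Topology ENNReal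

noncomputable section

/-- A general change-point model: a filtration `F` on `Ω`, probability measures `P k`
(the change occurs immediately after time `k`) and `Pinf` (no change), such that `P k`
and `Pinf` agree on `F n` for `n ≤ k` and are mutually absolutely continuous
on `F n` for `n > k`. -/
structure ChangePointModel (Ω : Type) [m0 : MeasurableSpace Ω] where
  F : ℕ → MeasurableSpace Ω
  F_le : ∀ n, F n ≤ m0
  F_mono : Monotone F
  F_zero : F 0 = ⊥
  P : ℕ → Measure Ω
  Pinf : Measure Ω
  P_prob : ∀ k, IsProbabilityMeasure (P k)
  Pinf_prob : IsProbabilityMeasure Pinf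
  agree : ∀ k n : ℕ, n ≤ k → (P k).trim (F_le n) = Pinf.trim (F_le n)
  ac₁ : ∀ k n : ℕ, k < n → (P k).trim (F_le n) ≪ Pinf.trim (F_le n)
  ac₂ : ∀ k n : ℕ, k < n → Pinf.trim (F_le n) ≪ (P k).trim (F_le n)

namespace ChangePointModel

variable {Ω : Type} [m0 : MeasurableSpace Ω] (M : ChangePointModel Ω)

/-- The log-likelihood ratio `Z n k = log (d(P k|F n)/d(P∞|F n))`. -/
def Z (n k : ℕ) (ω : Ω) : ℝ :=
  Real.log ((((M.P k).trim (M.F_le n)).rnDeriv (M.Pinf.trim (M.F_le n))) ω).toReal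

/-- A detection procedure: a stopping time of the filtration `F` with values in `{1,2,…,∞}`. -/
def IsDetection (τ : Ω → ℕ∞) : Prop :=
  (∀ ω, 1 ≤ τ ω) ∧ ∀ n : ℕ, MeasurableSet[M.F n] {ω | τ ω ≤ (n : ℕ∞)}

/-- The detection risk `R_ν(τ) = E_ν (τ - ν)⁺`. -/
def risk (ν : ℕ) (τ : Ω → ℕ∞) : ℝ≥0∞ :=
  ∫⁻ ω, ((τ ω - (ν : ℕ∞) : ℕ∞) : ℝ≥0∞) ∂(M.P ν)

/-- The conditional detection risk `R*_ν(τ) = E_ν (τ - ν | τ > ν)`. -/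
def crisk (ν : ℕ) (τ : Ω → ℕ∞) : ℝ≥0∞ :=
  M.risk ν τ / M.P ν {ω | (ν : ℕ∞) < τ ω}

/-- The moment-`ℓ` detection risk `E_ν ((τ - ν)⁺)^ℓ`. -/
def riskPow (ℓ : ℝ) (ν : ℕ) (τ : Ω → ℕ∞) : ℝ≥0∞ :=
  ∫⁻ ω, ((τ ω - (ν : ℕ∞) : ℕ∞) : ℝ≥0∞) ^ ℓ ∂(M.P ν)

/-- The conditional moment-`ℓ` detection risk `E_ν ((τ - ν)^ℓ | τ > ν)`. -/
def criskPow (ℓ : ℝ) (ν : ℕ) (τ : Ω → ℕ∞) : ℝ≥0∞ :=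
  M.riskPow ℓ ν τ / M.P ν {ω | (ν : ℕ∞) < τ ω}

/-- The Bayesian class `Δ(α,ϱ)` of detection procedures with weighted probability of
false alarm at most `α` (geometric prior with parameter `ϱ`). -/
def Delta (α ϱ : ℝ) : Set (Ω → ℕ∞) :=
  {τ | M.IsDetection τ ∧
    ∑' k : ℕ, ENNReal.ofReal (ϱ * (1 - ϱ) ^ k) * M.Pinf {ω | τ ω ≤ (k : ℕ∞)}
      ≤ ENNReal.ofReal α}

/-- The Shiryaev–Roberts statistic `R_n = ∑_{k=1}^n exp (Z_n^{k-1})`. -/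
def SRstat (n : ℕ) (ω : Ω) : ℝ :=
  ∑ k ∈ Finset.range n, Real.exp (M.Z n k ω)

/-- The Shiryaev–Roberts procedure with threshold `h`. -/
def SR (h : ℝ) (ω : Ω) : ℕ∞ :=
  sInf {n : ℕ∞ | ∃ m : ℕ, n = (m : ℕ∞) ∧ 1 ≤ m ∧ h ≤ M.SRstat m ω}

/-- Condition (A1): `Z (k+n) k / n → I` almost surely under `P k`, for every `k`. -/
def CondA1 (I : ℝ) : Prop :=
  ∀ k : ℕ, ∀ᵐ ω ∂(M.P k),
    Tendsto (fun n : ℕ => M.Z (k + n) k ω / n) atTop (𝓝 I)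

/-- Condition (A2): uniform complete convergence of `Z (k+n) k / n` to `I`. -/
def CondA2 (I : ℝ) : Prop :=
  ∀ ε : ℝ, 0 < ε →
    (∑' n : ℕ, ⨆ k : ℕ,
      M.P k {ω | ε < |M.Z (k + (n + 1)) k ω / (n + 1) - I|}) < ⊤

/-- Uniform `r`-complete convergence of `Z (k+n) k / n` to `I`. -/
def CondAr (r I : ℝ) : Prop :=
  ∀ ε : ℝ, 0 < ε →
    (∑' n : ℕ, ENNReal.ofReal ((n + 1 : ℝ) ^ (r - 1)) * ⨆ k : ℕ,
      M.P k {ω | ε < |M.Z (k + (n + 1)) k ω / (n + 1) - I|}) < ⊤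

/-- The class `H(β,k*,m*)` : local probability of a false alarm in windows of
length `m*` starting at `1 ≤ k ≤ k* - m*` is at most `β`. -/
def Hclass (β : ℝ) (kstar mstar : ℕ) : Set (Ω → ℕ∞) :=
  {τ | M.IsDetection τ ∧ ∀ k : ℕ, 1 ≤ k → k + mstar ≤ kstar →
    M.Pinf {ω | (k : ℕ∞) ≤ τ ω ∧ τ ω < ((k + mstar : ℕ) : ℕ∞)} ≤ ENNReal.ofReal β}

/-- The class `H*(β,k*,m*)` : local conditional probability of a false alarm
`P_∞(τ < k+m* | τ > k)` is at most `β` for `1 ≤ k ≤ k* - m*`. -/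
def HclassStar (β : ℝ) (kstar mstar : ℕ) : Set (Ω → ℕ∞) :=
  {τ | M.IsDetection τ ∧ ∀ k : ℕ, 1 ≤ k → k + mstar ≤ kstar →
    M.Pinf {ω | (k : ℕ∞) < τ ω ∧ τ ω < ((k + mstar : ℕ) : ℕ∞)}
        / M.Pinf {ω | (k : ℕ∞) < τ ω} ≤ ENNReal.ofReal β}

end ChangePointModel

/-- `ϱ_{1,β} = 1/(1+|log β|)`. -/
def rho1 (β : ℝ) : ℝ := 1 / (1 + |Real.log β|)

/-- `ϱ_{2,β} = ϱ_{1,β}/(1+|log|log β||)`. -/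
def rho2 (β : ℝ) : ℝ := rho1 β / (1 + |Real.log (|Real.log β|)|)

/-- `α₁(β,m*) = β + (1-ϱ_{1,β})^{m*+1}`. -/
def alpha1 (β : ℝ) (m : ℕ) : ℝ := β + (1 - rho1 β) ^ (m + 1)

/-- `α₂(β,k*) = β (1-ϱ_{2,β})^{k*}`. -/
def alpha2 (β : ℝ) (k : ℕ) : ℝ := β * (1 - rho2 β) ^ k

/-- `α₃(β,k*) = β (1-ϱ_{2,β})^{k*} / (1+β)`. -/
def alpha3 (β : ℝ) (k : ℕ) : ℝ := β * (1 - rho2 β) ^ k / (1 + β)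

namespace ChangePointModel

variable {Ω : Type} [m0 : MeasurableSpace Ω] (M : ChangePointModel Ω)

/-! ### Change of measure -/

lemma measurable_Z (n k : ℕ) : Measurable[M.F n] (M.Z n k) := by
  unfold Z
  exact Real.measurable_log.comp
    (ENNReal.measurable_toReal.comp (Measure.measurable_rnDeriv _ _))

/-- The junk values of `Real.log` and `ENNReal.toReal` in `Z` only occur on a null set, by
mutual absolute continuity. -/
lemma ofReal_exp_Z_ae {n k : ℕ} (hkn : k < n) :
    ∀ᵐ ω ∂(M.Pinf.trim (M.F_le n)), ENNReal.ofReal (Real.exp (M.Z n k ω)) =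
      ((M.P k).trim (M.F_le n)).rnDeriv (M.Pinf.trim (M.F_le n)) ω := by
  have := M.P_prob k
  have := M.Pinf_prob
  have h1 := Measure.rnDeriv_pos' (M.ac₂ k n hkn)
  have h2 := Measure.rnDeriv_lt_top ((M.P k).trim (M.F_le n)) (M.Pinf.trim (M.F_le n))
  filter_upwards [h1, h2] with ω h1 h2
  unfold Z
  rw [Real.exp_log (ENNReal.toReal_pos h1.ne' h2.ne), ENNReal.ofReal_toReal h2.ne]

lemma P_eq_setLIntegral {n k : ℕ} (hkn : k < n) {A : Set Ω} (hA : MeasurableSet[M.F n] A) :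
    M.P k A = ∫⁻ ω in A, ENNReal.ofReal (Real.exp (M.Z n k ω)) ∂M.Pinf := by
  have := M.P_prob k
  have := M.Pinf_prob
  have hm : Measurable[M.F n] fun ω => ENNReal.ofReal (Real.exp (M.Z n k ω)) :=
    ENNReal.measurable_ofReal.comp (Real.measurable_exp.comp (M.measurable_Z n k))
  rw [← trim_measurableSet_eq (M.F_le n) hA, ← Measure.setLIntegral_rnDeriv (M.ac₁ k n hkn),
    ← setLIntegral_trim (M.F_le n) hm hA]
  exact lintegral_congr_ae (ae_restrict_of_ae
    ((M.ofReal_exp_Z_ae hkn).mono fun ω h => h.symm))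

lemma P_eq_Pinf {n k : ℕ} (hnk : n ≤ k) {A : Set Ω} (hA : MeasurableSet[M.F n] A) :
    M.P k A = M.Pinf A := by
  rw [← trim_measurableSet_eq (M.F_le n) hA, M.agree k n hnk, trim_measurableSet_eq (M.F_le n) hA]

/-- Change of measure for events of `F n`, truncated at the level `C` of the log-likelihood
ratio. -/
lemma P_le_exp_mul_add {n k : ℕ} (hkn : k < n) {A : Set Ω} (hA : MeasurableSet[M.F n] A) (C : ℝ) :
    M.P k A ≤ ENNReal.ofReal (Real.exp C) * M.Pinf A + M.P k {ω | C < M.Z n k ω} := by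
  have hB : MeasurableSet[M.F n] {ω | M.Z n k ω ≤ C} := M.measurable_Z n k measurableSet_Iic
  have hsub : A ⊆ (A ∩ {ω | M.Z n k ω ≤ C}) ∪ {ω | C < M.Z n k ω} := by
    intro ω hω
    rcases le_or_gt (M.Z n k ω) C with h | h
    · exact Or.inl ⟨hω, h⟩
    · exact Or.inr h
  refine (measure_mono hsub).trans ((measure_union_le _ _).trans ?_)
  gcongr
  rw [M.P_eq_setLIntegral hkn (hA.inter hB)]
  calc ∫⁻ ω in A ∩ {ω | M.Z n k ω ≤ C}, ENNReal.ofReal (Real.exp (M.Z n k ω)) ∂M.Pinf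
      ≤ ∫⁻ ω in A ∩ {ω | M.Z n k ω ≤ C}, ENNReal.ofReal (Real.exp C) ∂M.Pinf := by
        refine setLIntegral_mono' (M.F_le n _ (hA.inter hB)) fun ω hω => ?_
        have := hω.2
        simp only [mem_ofPred_eq] at this
        gcongr
    _ = ENNReal.ofReal (Real.exp C) * M.Pinf (A ∩ {ω | M.Z n k ω ≤ C}) := setLIntegral_const _ _
    _ ≤ _ := by gcongr; exact inter_subset_left

/-! ### False alarms -/

/-- The tail `∑_{j ≥ k} ϱ(1-ϱ)^j = (1-ϱ)^k` of the prior bounds the false alarm probability. -/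
lemma Pinf_le_of_mem_Delta {α ρ : ℝ} (hρ : ρ ∈ Ioo (0 : ℝ) 1) {τ : Ω → ℕ∞}
    (hτ : τ ∈ M.Delta α ρ) (k : ℕ) :
    M.Pinf {ω | τ ω ≤ (k : ℕ∞)} ≤ ENNReal.ofReal (α * ((1 - ρ) ^ k)⁻¹) := by
  have h1ρ : 0 < 1 - ρ := by linarith [hρ.2]
  have hpow : 0 < (1 - ρ) ^ k := pow_pos h1ρ k
  have hs : HasSum (fun i : ℕ => ρ * (1 - ρ) ^ i) 1 := by
    have := (hasSum_geometric_of_lt_one h1ρ.le (by linarith [hρ.1])).mul_left ρ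
    rwa [_root_.sub_sub_cancel, mul_inv_cancel₀ hρ.1.ne'] at this
  have hsum : ∑' i : ℕ, ENNReal.ofReal (ρ * (1 - ρ) ^ i) = 1 := by
    rw [← ENNReal.ofReal_tsum_of_nonneg (fun i => mul_nonneg hρ.1.le (pow_nonneg h1ρ.le i))
      hs.summable, hs.tsum_eq, ENNReal.ofReal_one]
  have key : ENNReal.ofReal ((1 - ρ) ^ k) * M.Pinf {ω | τ ω ≤ (k : ℕ∞)} ≤ ENNReal.ofReal α := by
    refine le_trans ?_ hτ.2
    calc ENNReal.ofReal ((1 - ρ) ^ k) * M.Pinf {ω | τ ω ≤ (k : ℕ∞)}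
        = ∑' i : ℕ, ENNReal.ofReal (ρ * (1 - ρ) ^ i) *
            (ENNReal.ofReal ((1 - ρ) ^ k) * M.Pinf {ω | τ ω ≤ (k : ℕ∞)}) := by
          rw [ENNReal.tsum_mul_right, hsum, one_mul]
      _ ≤ ∑' i : ℕ, ENNReal.ofReal (ρ * (1 - ρ) ^ (k + i)) *
            M.Pinf {ω | τ ω ≤ ((k + i : ℕ) : ℕ∞)} := by
          refine ENNReal.tsum_le_tsum fun i => ?_
          rw [← mul_assoc, ← ENNReal.ofReal_mul (mul_nonneg hρ.1.le (pow_nonneg h1ρ.le i))]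
          have : ρ * (1 - ρ) ^ i * (1 - ρ) ^ k = ρ * (1 - ρ) ^ (k + i) := by ring
          rw [this]
          gcongr
          exact Nat.le_add_right k i
      _ ≤ _ := ENNReal.tsum_comp_le_tsum_of_injective (add_right_injective k)
          (fun j : ℕ => ENNReal.ofReal (ρ * (1 - ρ) ^ j) * M.Pinf {ω | τ ω ≤ (j : ℕ∞)})
  have hne : ENNReal.ofReal ((1 - ρ) ^ k) ≠ 0 := by simpa using hpow
  rw [ENNReal.ofReal_mul' (by positivity), ENNReal.ofReal_inv_of_pos hpow, ← div_eq_mul_inv,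
    ENNReal.le_div_iff_mul_le (Or.inl hne) (Or.inl ENNReal.ofReal_ne_top), mul_comm]
  exact key

lemma SR_le_iff (h : ℝ) (ω : Ω) (n : ℕ) :
    M.SR h ω ≤ (n : ℕ∞) ↔ ∃ m : ℕ, 1 ≤ m ∧ m ≤ n ∧ h ≤ M.SRstat m ω := by
  unfold SR
  constructor
  · intro hle
    have hne : {n : ℕ∞ | ∃ m : ℕ, n = (m : ℕ∞) ∧ 1 ≤ m ∧ h ≤ M.SRstat m ω}.Nonempty := by
      by_contra hcon
      rw [not_nonempty_iff_eq_empty] at hcon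
      rw [hcon, sInf_empty, top_le_iff] at hle
      exact ENat.natCast_ne_top n hle
    obtain ⟨m, hm, h1, h2⟩ := csInf_mem hne
    rw [hm] at hle
    exact ⟨m, h1, by exact_mod_cast hle, h2⟩
  · rintro ⟨m, h1, h2, h3⟩
    have hle : sInf {n : ℕ∞ | ∃ m : ℕ, n = (m : ℕ∞) ∧ 1 ≤ m ∧ h ≤ M.SRstat m ω} ≤ (m : ℕ∞) :=
      sInf_le ⟨m, rfl, h1, h3⟩
    exact hle.trans (by exact_mod_cast h2)

lemma measurable_SRstat (n : ℕ) : Measurable[M.F n] (M.SRstat n) := by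
  unfold SRstat
  exact Finset.measurable_fun_sum _
    fun k _ => Real.measurable_exp.comp (M.measurable_Z n k)

lemma isDetection_SR (h : ℝ) : M.IsDetection (M.SR h) := by
  constructor
  · intro ω
    refine le_sInf ?_
    rintro _ ⟨m, rfl, h1, -⟩
    exact_mod_cast h1
  · intro n
    have : {ω | M.SR h ω ≤ (n : ℕ∞)} =
        ⋃ m ∈ Finset.Icc 1 n, {ω | h ≤ M.SRstat m ω} := by
      ext ω
      simp [SR_le_iff, and_assoc]
    rw [this]
    refine Finset.measurableSet_biUnion _ fun m hm => ?_
    exact M.F_mono (Finset.mem_Icc.1 hm).2 _ (M.measurable_SRstat m measurableSet_Ici)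

lemma measurableSet_SR_eq (h : ℝ) (m : ℕ) :
    MeasurableSet[M.F m] {ω | M.SR h ω = (m : ℕ∞)} := by
  have : {ω | M.SR h ω = (m : ℕ∞)} =
      {ω | M.SR h ω ≤ (m : ℕ∞)} \ ⋃ j ∈ Finset.range m, {ω | M.SR h ω ≤ (j : ℕ∞)} := by
    ext ω
    simp only [mem_ofPred_eq, Set.mem_sdiff, mem_iUnion, Finset.mem_range, not_exists, not_le]
    constructor
    · intro hω
      rw [hω]
      exact ⟨le_rfl, fun j hj => by exact_mod_cast hj⟩
    · rintro ⟨h1, h2⟩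
      obtain ⟨a, ha⟩ := ENat.ne_top_iff_exists.1 (ne_top_of_le_ne_top (ENat.natCast_ne_top m) h1)
      rw [← ha] at h1 h2 ⊢
      have h1' : a ≤ m := by exact_mod_cast h1
      by_contra hne
      have hlt : a < m := lt_of_le_of_ne h1' (fun h => hne (by rw [h]))
      exact lt_irrefl _ (h2 a hlt)
  rw [this]
  refine ((M.isDetection_SR h).2 m).diff (Finset.measurableSet_biUnion _ fun j hj => ?_)
  exact M.F_mono (Finset.mem_range.1 hj).le _ ((M.isDetection_SR h).2 j)

/-- Doob-type bound `P_∞(T(h) ≤ k) ≤ k / h`: on `{T(h) = m}` the threshold is at most `R_m`, and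
`E_∞[R_m; T(h) = m] = ∑_{j < m} P_j(T(h) = m)` by change of measure. -/
lemma Pinf_SR_le {h : ℝ} (k : ℕ) :
    ENNReal.ofReal h * M.Pinf {ω | M.SR h ω ≤ (k : ℕ∞)} ≤ k := by
  set A : ℕ → Set Ω := fun m => {ω | M.SR h ω = (m : ℕ∞)} with hAdef
  have hA : ∀ m, MeasurableSet[M.F m] (A m) := M.measurableSet_SR_eq h
  have hA0 : ∀ m, MeasurableSet (A m) := fun m => M.F_le m _ (hA m)
  have hsub : {ω | M.SR h ω ≤ (k : ℕ∞)} ⊆ ⋃ m ∈ Finset.range (k + 1), A m := by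
    intro ω hω
    simp only [mem_ofPred_eq] at hω
    obtain ⟨a, ha⟩ := ENat.ne_top_iff_exists.1 (ne_top_of_le_ne_top (ENat.natCast_ne_top k) hω)
    rw [← ha] at hω
    have : a ≤ k := by exact_mod_cast hω
    simp only [mem_iUnion, Finset.mem_range]
    exact ⟨a, by omega, ha.symm⟩
  have hstep : ∀ m ∈ Finset.range (k + 1), ENNReal.ofReal h * M.Pinf (A m) ≤
      ∑ j ∈ Finset.range k, M.P j (A m) := by
    intro m hm
    calc ENNReal.ofReal h * M.Pinf (A m) = ∫⁻ ω in A m, ENNReal.ofReal h ∂M.Pinf :=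
          (setLIntegral_const _ _).symm
      _ ≤ ∫⁻ ω in A m, ∑ j ∈ Finset.range m, ENNReal.ofReal (Real.exp (M.Z m j ω)) ∂M.Pinf := by
          refine setLIntegral_mono' (hA0 m) fun ω hω => ?_
          have hω' : M.SR h ω = (m : ℕ∞) := hω
          obtain ⟨m', h1, h2, h3⟩ := (M.SR_le_iff h ω m).1 hω'.le
          have h4 : M.SR h ω ≤ (m' : ℕ∞) := (M.SR_le_iff h ω m').2 ⟨m', h1, le_rfl, h3⟩
          rw [hω'] at h4
          have h5 : m = m' := le_antisymm (by exact_mod_cast h4) h2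
          subst h5
          rw [← ENNReal.ofReal_sum_of_nonneg fun j _ => (Real.exp_pos _).le]
          exact ENNReal.ofReal_le_ofReal h3
      _ = ∑ j ∈ Finset.range m, ∫⁻ ω in A m, ENNReal.ofReal (Real.exp (M.Z m j ω)) ∂M.Pinf := by
          refine lintegral_finsetSum _ fun j _ => ?_
          exact ENNReal.measurable_ofReal.comp (Real.measurable_exp.comp
            ((M.measurable_Z m j).mono (M.F_le m) le_rfl))
      _ = ∑ j ∈ Finset.range m, M.P j (A m) :=
          Finset.sum_congr rfl fun j hj =>
            (M.P_eq_setLIntegral (Finset.mem_range.1 hj) (hA m)).symm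
      _ ≤ ∑ j ∈ Finset.range k, M.P j (A m) :=
          Finset.sum_le_sum_of_subset
            (Finset.range_mono (Nat.lt_succ_iff.1 (Finset.mem_range.1 hm)))
  have hdisj : ∀ s : Set ℕ, s.PairwiseDisjoint A := by
    intro s i _ j _ hij
    refine disjoint_left.2 fun ω hi hj => hij ?_
    have hi' : M.SR h ω = (i : ℕ∞) := hi
    have hj' : M.SR h ω = (j : ℕ∞) := hj
    exact_mod_cast hi'.symm.trans hj'
  calc ENNReal.ofReal h * M.Pinf {ω | M.SR h ω ≤ (k : ℕ∞)}
      ≤ ENNReal.ofReal h * ∑ m ∈ Finset.range (k + 1), M.Pinf (A m) := by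
        gcongr
        exact (measure_mono hsub).trans (measure_biUnion_finset_le _ _)
    _ = ∑ m ∈ Finset.range (k + 1), ENNReal.ofReal h * M.Pinf (A m) := Finset.mul_sum _ _ _
    _ ≤ ∑ m ∈ Finset.range (k + 1), ∑ j ∈ Finset.range k, M.P j (A m) := Finset.sum_le_sum hstep
    _ = ∑ j ∈ Finset.range k, ∑ m ∈ Finset.range (k + 1), M.P j (A m) := Finset.sum_comm
    _ ≤ ∑ j ∈ Finset.range k, 1 := by
        refine Finset.sum_le_sum fun j _ => ?_
        have := M.P_prob j
        rw [← measure_biUnion_finset (hdisj _) fun m _ => hA0 m]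
        exact prob_le_one
    _ = k := by simp

/-- The weighted false alarm probability of `T((1-α)/(ϱα))` is at most `(1-ϱ)α/(1-α)`. -/
lemma SR_mem_Delta {α ρ : ℝ} (hα : α ∈ Ioo (0 : ℝ) 1) (hρ : ρ ∈ Ioo (0 : ℝ) 1) (hαρ : α ≤ ρ) :
    M.SR ((1 - α) / (ρ * α)) ∈ M.Delta α ρ := by
  refine ⟨M.isDetection_SR _, ?_⟩
  set h := (1 - α) / (ρ * α) with hh
  have hρ0 := hρ.1
  have hα0 := hα.1
  have h1ρ : 0 < 1 - ρ := by linarith [hρ.2]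
  have h1α : 0 < 1 - α := by linarith [hα.2]
  have hpos : 0 < h := by positivity
  have hnorm : ‖(1 - ρ : ℝ)‖ < 1 := by
    rw [Real.norm_of_nonneg h1ρ.le]; linarith
  have hs : HasSum (fun k : ℕ => ρ / h * (k * (1 - ρ) ^ k)) (ρ / h * ((1 - ρ) / ρ ^ 2)) := by
    have := (hasSum_coe_mul_geometric_of_norm_lt_one hnorm).mul_left (ρ / h)
    simpa using this
  calc ∑' k : ℕ, ENNReal.ofReal (ρ * (1 - ρ) ^ k) * M.Pinf {ω | M.SR h ω ≤ (k : ℕ∞)}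
      ≤ ∑' k : ℕ, ENNReal.ofReal (ρ / h * (k * (1 - ρ) ^ k)) := by
        refine ENNReal.tsum_le_tsum fun k => ?_
        have hk : M.Pinf {ω | M.SR h ω ≤ (k : ℕ∞)} ≤ ENNReal.ofReal (k / h) := by
          rw [ENNReal.ofReal_div_of_pos hpos, ENNReal.ofReal_natCast,
            ENNReal.le_div_iff_mul_le (Or.inl (by simpa using hpos)) (Or.inl ENNReal.ofReal_ne_top),
            mul_comm]
          exact M.Pinf_SR_le k
        have : ρ / h * (k * (1 - ρ) ^ k) = ρ * (1 - ρ) ^ k * (k / h) := by ring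
        rw [this, ENNReal.ofReal_mul (mul_nonneg hρ0.le (pow_nonneg h1ρ.le k))]
        exact mul_le_mul' le_rfl hk
    _ = ENNReal.ofReal (ρ / h * ((1 - ρ) / ρ ^ 2)) := by
        rw [← ENNReal.ofReal_tsum_of_nonneg (fun k => by positivity) hs.summable, hs.tsum_eq]
    _ ≤ ENNReal.ofReal α := by
        refine ENNReal.ofReal_le_ofReal ?_
        have : ρ / h * ((1 - ρ) / ρ ^ 2) = α * ((1 - ρ) / (1 - α)) := by
          rw [hh]; field_simp
        rw [this]
        refine mul_le_of_le_one_right hα0.le ?_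
        rw [div_le_one h1α]
        linarith

/-! ### Nonasymptotic bounds on the detection delay -/

lemma measurableSet_lt {τ : Ω → ℕ∞} (hτ : M.IsDetection τ) (n : ℕ) :
    MeasurableSet[M.F n] {ω | (n : ℕ∞) < τ ω} := by
  have : {ω | (n : ℕ∞) < τ ω} = {ω | τ ω ≤ (n : ℕ∞)}ᶜ := by ext ω; simp
  rw [this]
  exact (hτ.2 n).compl

lemma le_criskPow {ℓ : ℝ} (hℓ : 0 ≤ ℓ) (ν N : ℕ) {τ : Ω → ℕ∞} (hτ : M.IsDetection τ) :
    (N : ℝ≥0∞) ^ ℓ * M.P ν {ω | ((ν + N : ℕ) : ℕ∞) < τ ω} ≤ M.criskPow ℓ ν τ := by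
  have := M.P_prob ν
  have hm := M.F_le _ _ (M.measurableSet_lt hτ (ν + N))
  have h1 : (N : ℝ≥0∞) ^ ℓ * M.P ν {ω | ((ν + N : ℕ) : ℕ∞) < τ ω} ≤ M.riskPow ℓ ν τ := by
    rw [← setLIntegral_const]
    refine (setLIntegral_mono' hm fun ω hω => ?_).trans (setLIntegral_le_lintegral _ _)
    refine ENNReal.rpow_le_rpow ?_ hℓ
    have : (N : ℕ∞) ≤ τ ω - ν := by
      refine ENat.le_sub_of_add_le_left (ENat.natCast_ne_top ν) ?_
      have hω' : ((ν + N : ℕ) : ℕ∞) < τ ω := hω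
      push_cast at hω'
      exact hω'.le
    have h2 := ENat.toENNReal_le.2 this
    simpa using h2
  refine h1.trans ?_
  unfold criskPow
  rw [div_eq_mul_inv]
  exact le_mul_of_one_le_right' (ENNReal.one_le_inv.2 prob_le_one)

lemma rpow_succ_le {ℓ : ℝ} (hℓ : 1 ≤ ℓ) (m : ℕ) :
    ((m + 1 : ℕ) : ℝ) ^ ℓ ≤ (m : ℝ) ^ ℓ + ℓ * ((m + 1 : ℕ) : ℝ) ^ (ℓ - 1) := by
  have hm : (0 : ℝ) < ((m + 1 : ℕ) : ℝ) := by positivity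
  set x : ℝ := ((m + 1 : ℕ) : ℝ) with hx
  have hmx : (m : ℝ) = x - 1 := by rw [hx]; push_cast; ring
  have hx1 : 1 ≤ x := by rw [hx]; push_cast; linarith [(Nat.cast_nonneg m : (0 : ℝ) ≤ m)]
  have hs : (-1 : ℝ) ≤ -x⁻¹ := by
    have := inv_le_one_of_one_le₀ hx1
    linarith
  have hB := one_add_mul_self_le_rpow_one_add hs hℓ
  have h1 : (m : ℝ) ^ ℓ = x ^ ℓ * (1 + -x⁻¹) ^ ℓ := by
    rw [← Real.mul_rpow hm.le (by linarith), hmx]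
    congr 1
    field_simp
    ring
  have h2 : x ^ (ℓ - 1) = x ^ ℓ * x⁻¹ := by
    rw [Real.rpow_sub_one hm.ne', div_eq_mul_inv]
  have hpos : 0 ≤ x ^ ℓ := Real.rpow_nonneg hm.le _
  rw [h1, h2]
  nlinarith [mul_le_mul_of_nonneg_left hB hpos]

/-- Summation by parts for the moment of an `ℕ∞`-valued delay. -/
lemma pow_le_add_tsum {ℓ : ℝ} (hℓ : 1 ≤ ℓ) (N : ℕ) (d : ℕ∞) :
    (d : ℝ≥0∞) ^ ℓ ≤ (N : ℝ≥0∞) ^ ℓ + ∑' i : ℕ,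
      ENNReal.ofReal (ℓ * ((N + i + 1 : ℕ) : ℝ) ^ (ℓ - 1)) *
        (if ((N + i : ℕ) : ℕ∞) < d then 1 else 0) := by
  have hℓ0 : 0 ≤ ℓ := by linarith
  rcases eq_or_ne d ⊤ with rfl | hd
  · have htop : ∑' i : ℕ, ENNReal.ofReal (ℓ * ((N + i + 1 : ℕ) : ℝ) ^ (ℓ - 1)) *
        (if ((N + i : ℕ) : ℕ∞) < ⊤ then 1 else 0) = ⊤ := by
      rw [← top_le_iff, ← ENNReal.tsum_const_eq_top_of_ne_zero (α := ℕ) one_ne_zero]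
      refine ENNReal.tsum_le_tsum fun i => ?_
      rw [if_pos (ENat.natCast_lt_top _), mul_one, ENNReal.one_le_ofReal]
      refine one_le_mul_of_one_le_of_one_le hℓ (Real.one_le_rpow ?_ (by linarith))
      exact_mod_cast Nat.succ_le_succ (Nat.zero_le _)
    rw [htop, add_top]
    exact le_top
  · obtain ⟨m, rfl⟩ := ENat.ne_top_iff_exists.1 hd
    rw [ENat.toENNReal_coe]
    rcases le_total m N with h | h
    · refine le_add_right (ENNReal.rpow_le_rpow ?_ hℓ0)
      exact_mod_cast h
    · obtain ⟨j, rfl⟩ := Nat.exists_eq_add_of_le h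
      have hind : ∀ j : ℕ, ((N + j : ℕ) : ℝ≥0∞) ^ ℓ ≤ (N : ℝ≥0∞) ^ ℓ + ∑ i ∈ Finset.range j,
          ENNReal.ofReal (ℓ * ((N + i + 1 : ℕ) : ℝ) ^ (ℓ - 1)) := by
        intro j
        induction j with
        | zero => simp
        | succ j ih =>
          rw [Finset.sum_range_succ, ← add_assoc ((N : ℝ≥0∞) ^ ℓ)]
          refine le_trans ?_ (add_le_add_left ih _)
          rw [← ENNReal.ofReal_natCast (N + (j + 1)), ← ENNReal.ofReal_natCast (N + j),
            ENNReal.ofReal_rpow_of_nonneg (Nat.cast_nonneg _) hℓ0,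
            ENNReal.ofReal_rpow_of_nonneg (Nat.cast_nonneg _) hℓ0,
            ← ENNReal.ofReal_add (by positivity) (by positivity)]
          exact ENNReal.ofReal_le_ofReal (rpow_succ_le hℓ (N + j))
      refine (hind j).trans (add_le_add_right ?_ _)
      refine le_trans (Finset.sum_le_sum fun i hi => ?_) (ENNReal.sum_le_tsum (Finset.range j))
      rw [if_pos (by exact_mod_cast Nat.add_lt_add_left (Finset.mem_range.1 hi) N), mul_one]

lemma Z_lt_log_of_lt_SR {h : ℝ} {ν n : ℕ} (hn : ν < n) {ω : Ω}
    (hω : (n : ℕ∞) < M.SR h ω) : M.Z n ν ω < Real.log h := by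
  have h1 : M.SRstat n ω < h := by
    by_contra hcon
    rw [not_lt] at hcon
    exact absurd ((M.SR_le_iff h ω n).2 ⟨n, by omega, le_rfl, hcon⟩) (not_le.2 hω)
  have h2 : Real.exp (M.Z n ν ω) ≤ M.SRstat n ω :=
    Finset.single_le_sum (f := fun k => Real.exp (M.Z n k ω))
      (fun k _ => (Real.exp_pos _).le) (Finset.mem_range.2 hn)
  have h3 := h2.trans_lt h1
  exact (Real.lt_log_iff_exp_lt ((Real.exp_pos _).trans h3)).2 h3

/-- The overshoot of the delay beyond `N + 1 ≥ log h / (I - ε)` contributes a constant that does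
not depend on `h` and `ν`, since `T(h) > ν + n` forces `Z_{ν+n}^ν < log h`. -/
lemma exists_riskPow_SR_le {r I : ℝ} (hAr : M.CondAr r I) {ℓ : ℝ}
    (hℓ : 1 ≤ ℓ) (hℓr : ℓ ≤ r) {ε : ℝ} (hε : 0 < ε) (hεI : ε < I) :
    ∃ C : ℝ, 0 ≤ C ∧ ∀ (h : ℝ) (N : ℕ), Real.log h ≤ (N + 1) * (I - ε) → ∀ ν : ℕ,
      M.riskPow ℓ ν (M.SR h) ≤ ENNReal.ofReal ((N + 1 : ℝ) ^ ℓ + C) := by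
  have hS := hAr ε hε
  set w : ℕ → ℝ≥0∞ := fun n => ENNReal.ofReal ((n + 1 : ℝ) ^ (r - 1)) * ⨆ k : ℕ,
      M.P k {ω | ε < |M.Z (k + (n + 1)) k ω / (n + 1) - I|} with hw
  set K : ℝ≥0∞ := ENNReal.ofReal (ℓ * 2 ^ (r - 1)) * ∑' n, w n with hK
  have hKtop : K ≠ ⊤ := ENNReal.mul_ne_top ENNReal.ofReal_ne_top hS.ne
  refine ⟨K.toReal, ENNReal.toReal_nonneg, fun h N hN ν => ?_⟩
  have hset : ∀ i : ℕ, MeasurableSet {ω | ((ν + (N + 1 + i) : ℕ) : ℕ∞) < M.SR h ω} := fun i =>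
    M.F_le _ _ (M.measurableSet_lt (M.isDetection_SR h) _)
  have hfun : ∀ (i : ℕ) (ω : Ω),
      (if ((N + 1 + i : ℕ) : ℕ∞) < M.SR h ω - ν then (1 : ℝ≥0∞) else 0) =
      {ω | ((ν + (N + 1 + i) : ℕ) : ℕ∞) < M.SR h ω}.indicator 1 ω := by
    intro i ω
    have hiff : ((N + 1 + i : ℕ) : ℕ∞) < M.SR h ω - ν ↔
        ((ν + (N + 1 + i) : ℕ) : ℕ∞) < M.SR h ω := by
      rw [lt_tsub_iff_left, ← Nat.cast_add]
    simp only [indicator, mem_ofPred_eq, Pi.one_apply, hiff]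
  have hterm : ∀ i : ℕ, ENNReal.ofReal (ℓ * ((N + 1 + i + 1 : ℕ) : ℝ) ^ (ℓ - 1)) *
      M.P ν {ω | ((ν + (N + 1 + i) : ℕ) : ℕ∞) < M.SR h ω} ≤
      ENNReal.ofReal (ℓ * 2 ^ (r - 1)) * w (N + i) := by
    intro i
    have hc : ℓ * ((N + 1 + i + 1 : ℕ) : ℝ) ^ (ℓ - 1) ≤
        ℓ * 2 ^ (r - 1) * (((N + i : ℕ) : ℝ) + 1) ^ (r - 1) := by
      rw [mul_assoc, ← Real.mul_rpow (by norm_num) (by positivity)]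
      refine mul_le_mul_of_nonneg_left ?_ (by linarith)
      have h1 : (1 : ℝ) ≤ ((N + 1 + i + 1 : ℕ) : ℝ) := by
        exact_mod_cast Nat.succ_le_succ (Nat.zero_le _)
      refine (Real.rpow_le_rpow_of_exponent_le h1 (by linarith : ℓ - 1 ≤ r - 1)).trans ?_
      refine Real.rpow_le_rpow (by positivity) ?_ (by linarith)
      have : (0 : ℝ) ≤ N := Nat.cast_nonneg _
      have : (0 : ℝ) ≤ i := Nat.cast_nonneg _
      push_cast
      linarith
    have hp : M.P ν {ω | ((ν + (N + 1 + i) : ℕ) : ℕ∞) < M.SR h ω} ≤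
        ⨆ k : ℕ, M.P k {ω | ε < |M.Z (k + ((N + i) + 1)) k ω / ((N + i : ℕ) + 1 : ℝ) - I|} := by
      refine le_trans (measure_mono fun ω hω => ?_) (le_iSup
        (fun k : ℕ => M.P k {ω | ε < |M.Z (k + ((N + i) + 1)) k ω / ((N + i : ℕ) + 1 : ℝ) - I|}) ν)
      have hidx : ν + (N + 1 + i) = ν + ((N + i) + 1) := by omega
      rw [hidx] at hω
      have hZ := M.Z_lt_log_of_lt_SR (ν := ν) (by omega) hω
      have hpos : (0 : ℝ) < ((N + i : ℕ) : ℝ) + 1 := by positivity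
      have hle : (N + 1 : ℝ) * (I - ε) ≤ (((N + i : ℕ) : ℝ) + 1) * (I - ε) := by
        refine mul_le_mul_of_nonneg_right ?_ (by linarith)
        push_cast
        linarith [(Nat.cast_nonneg i : (0 : ℝ) ≤ i)]
      have hdiv : M.Z (ν + ((N + i) + 1)) ν ω / (((N + i : ℕ) : ℝ) + 1) < I - ε := by
        rw [div_lt_iff₀ hpos]
        linarith
      rw [mem_ofPred_eq]
      refine lt_of_lt_of_le ?_ (neg_le_abs _)
      linarith
    rw [hw]
    simp only
    rw [← mul_assoc, ← ENNReal.ofReal_mul (by positivity)]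
    exact mul_le_mul' (ENNReal.ofReal_le_ofReal hc) hp
  have hNN : ((N + 1 : ℕ) : ℝ≥0∞) ^ ℓ = ENNReal.ofReal ((N + 1 : ℝ) ^ ℓ) := by
    rw [← ENNReal.ofReal_natCast, ENNReal.ofReal_rpow_of_nonneg (Nat.cast_nonneg _) (by linarith)]
    push_cast
    rfl
  have := M.P_prob ν
  calc M.riskPow ℓ ν (M.SR h)
      ≤ ∫⁻ ω, (((N + 1 : ℕ) : ℝ≥0∞) ^ ℓ + ∑' i : ℕ,
          ENNReal.ofReal (ℓ * ((N + 1 + i + 1 : ℕ) : ℝ) ^ (ℓ - 1)) *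
          {ω | ((ν + (N + 1 + i) : ℕ) : ℕ∞) < M.SR h ω}.indicator 1 ω) ∂(M.P ν) := by
        refine lintegral_mono fun ω => ?_
        refine (pow_le_add_tsum hℓ (N + 1) (M.SR h ω - ν)).trans (le_of_eq ?_)
        simp only [hfun]
    _ = ((N + 1 : ℕ) : ℝ≥0∞) ^ ℓ + ∑' i : ℕ,
          ENNReal.ofReal (ℓ * ((N + 1 + i + 1 : ℕ) : ℝ) ^ (ℓ - 1)) *
          M.P ν {ω | ((ν + (N + 1 + i) : ℕ) : ℕ∞) < M.SR h ω} := by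
        rw [lintegral_add_left measurable_const, lintegral_const, measure_univ, mul_one,
          lintegral_tsum]
        · congr 2
          ext i
          rw [lintegral_const_mul _ (measurable_one.indicator (hset i)),
            lintegral_indicator_one (hset i)]
        · intro i
          exact ((measurable_one.indicator (hset i)).const_mul _).aemeasurable
    _ ≤ ((N + 1 : ℕ) : ℝ≥0∞) ^ ℓ + ∑' i : ℕ, ENNReal.ofReal (ℓ * 2 ^ (r - 1)) * w (N + i) :=
        add_le_add_right (ENNReal.tsum_le_tsum hterm) _
    _ ≤ ((N + 1 : ℕ) : ℝ≥0∞) ^ ℓ + K := by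
        refine add_le_add_right ?_ _
        rw [ENNReal.tsum_mul_left]
        exact mul_le_mul' le_rfl
          (ENNReal.tsum_comp_le_tsum_of_injective (add_right_injective N) w)
    _ = ENNReal.ofReal ((N + 1 : ℝ) ^ ℓ + K.toReal) := by
        rw [hNN, ENNReal.ofReal_add (by positivity) ENNReal.toReal_nonneg,
          ENNReal.ofReal_toReal hKtop]

end ChangePointModel

namespace ChangePointModel

variable {Ω : Type} [m0 : MeasurableSpace Ω] (M : ChangePointModel Ω)

/-! ### Asymptotics -/

lemma tendsto_prob_deviation {r I : ℝ} (hr : 1 < r) (hAr : M.CondAr r I) (ν : ℕ) {ε : ℝ}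
    (hε : 0 < ε) :
    Tendsto (fun n : ℕ => (M.P ν {ω | ε < |M.Z (ν + n) ν ω / (n : ℝ) - I|}).toReal)
      atTop (𝓝 0) := by
  rw [← tendsto_add_atTop_iff_nat 1]
  have h0 := ENNReal.tendsto_atTop_zero_of_tsum_ne_top (hAr ε hε).ne
  have h1 : Tendsto (fun n : ℕ => M.P ν {ω | ε < |M.Z (ν + (n + 1)) ν ω / ((n + 1 : ℕ) : ℝ) - I|})
      atTop (𝓝 0) := by
    refine tendsto_of_tendsto_of_tendsto_of_le_of_le tendsto_const_nhds h0 (fun n => zero_le)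
      fun n => ?_
    have hw : (1 : ℝ≥0∞) ≤ ENNReal.ofReal ((n + 1 : ℝ) ^ (r - 1)) := by
      rw [ENNReal.one_le_ofReal]
      exact Real.one_le_rpow (by linarith [(Nat.cast_nonneg n : (0 : ℝ) ≤ n)]) (by linarith)
    push_cast
    exact (le_iSup (fun k : ℕ => M.P k {ω | ε < |M.Z (k + (n + 1)) k ω / ((n : ℝ) + 1) - I|})
      ν).trans (le_mul_of_one_le_left' hw)
  have := (ENNReal.tendsto_toReal ENNReal.zero_ne_top).comp h1
  simpa [Function.comp_def] using this

lemma ofReal_one_sub_le {μ : Measure Ω} [IsProbabilityMeasure μ] {A : Set Ω}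
    (hA : MeasurableSet A) {q : ℝ} (hq : 0 ≤ q) (h : μ A ≤ ENNReal.ofReal q) :
    ENNReal.ofReal (1 - q) ≤ μ Aᶜ := by
  rw [prob_compl_eq_one_sub hA, ENNReal.ofReal_sub _ hq, ENNReal.ofReal_one]
  exact tsub_le_tsub_left h 1

lemma compl_le_eq {Ω : Type} (τ : Ω → ℕ∞) (n : ℕ) :
    {ω | τ ω ≤ (n : ℕ∞)}ᶜ = {ω | (n : ℕ∞) < τ ω} := by
  ext ω; simp

lemma tendsto_abs_log : Tendsto (fun α : ℝ => |Real.log α|) (𝓝[>] (0 : ℝ)) atTop :=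
  tendsto_abs_atBot_atTop.comp Real.tendsto_log_nhdsGT_zero

lemma eventually_Ioo : ∀ᶠ α : ℝ in 𝓝[>] (0 : ℝ), α ∈ Ioo (0 : ℝ) 1 :=
  Ioo_mem_nhdsGT one_pos

/-- A procedure in `Δ(α)` cannot stop before `ν + (1-o(1)) |log α| / I`, except on an event of
vanishing `P_ν`-probability, uniformly over the class. -/
lemma eventually_le_iInf {r I : ℝ} (hr : 1 < r) (hI : 0 < I) (hAr : M.CondAr r I)
    {ϱ : ℝ → ℝ} (hϱmem : ∀ α ∈ Set.Ioo (0 : ℝ) 1, ϱ α ∈ Set.Ioo (0 : ℝ) 1)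
    (hϱ0 : Tendsto ϱ (𝓝[>] (0 : ℝ)) (𝓝 0)) {ℓ : ℝ} (hℓ : 1 ≤ ℓ) (ν : ℕ) {c : ℝ} (hc : c < 1) :
    ∀ᶠ α in 𝓝[>] (0 : ℝ), ENNReal.ofReal c ≤
      (⨅ τ ∈ M.Delta α (ϱ α), M.criskPow ℓ ν τ) / ENNReal.ofReal ((|Real.log α| / I) ^ ℓ) := by
  have hℓ0 : 0 < ℓ := by linarith
  obtain ⟨t, htc, ht⟩ : ∃ t : ℝ, c < t ^ ℓ ∧ t ∈ Ioo (0 : ℝ) 1 := by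
    have h1 : Tendsto (fun t : ℝ => t ^ ℓ) (𝓝[<] 1) (𝓝 1) := by
      have := (Real.continuousAt_rpow_const 1 ℓ (Or.inr hℓ0.le)).tendsto
      rw [Real.one_rpow] at this
      exact this.mono_left nhdsWithin_le_nhds
    exact ((h1.eventually (lt_mem_nhds hc)).and (Ioo_mem_nhdsLT one_pos)).exists
  have ht0 := ht.1
  have ht1 := ht.2
  set L : ℝ → ℝ := fun α => |Real.log α| with hL
  have hLtop : Tendsto L (𝓝[>] (0 : ℝ)) atTop := tendsto_abs_log
  set N : ℝ → ℕ := fun α => ⌊t / I * L α⌋₊ with hN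
  have hNL : Tendsto (fun α => (N α : ℝ) / L α) (𝓝[>] (0 : ℝ)) (𝓝 (t / I)) :=
    (tendsto_nat_floor_mul_div_atTop (by positivity)).comp hLtop
  have hNtop : Tendsto N (𝓝[>] (0 : ℝ)) atTop :=
    tendsto_nat_floor_atTop.comp (hLtop.const_mul_atTop (by positivity))
  set b : ℕ → ℝ := fun n =>
    (M.P ν {ω | (1 - t) * I < |M.Z (ν + n) ν ω / (n : ℝ) - I|}).toReal with hb
  have hb0 : Tendsto (fun α => b (N α)) (𝓝[>] (0 : ℝ)) (𝓝 0) :=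
    (M.tendsto_prob_deviation hr hAr ν (mul_pos (by linarith) hI)).comp hNtop
  set e : ℝ → ℝ := fun α =>
    Real.exp (L α * (-(1 - t) ^ 2 + ((ν : ℝ) / L α + N α / L α) * -Real.log (1 - ϱ α))) with he
  have he0 : Tendsto e (𝓝[>] (0 : ℝ)) (𝓝 0) := by
    have hlog : Tendsto (fun α => -Real.log (1 - ϱ α)) (𝓝[>] (0 : ℝ)) (𝓝 0) := by
      have h1 : Tendsto (fun α => 1 - ϱ α) (𝓝[>] (0 : ℝ)) (𝓝 1) := by
        simpa using hϱ0.const_sub 1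
      have h2 := (Real.continuousAt_log one_ne_zero).tendsto.comp h1
      rw [Real.log_one] at h2
      simpa using h2.neg
    have h3 : Tendsto (fun α => -(1 - t) ^ 2 +
        ((ν : ℝ) / L α + N α / L α) * -Real.log (1 - ϱ α)) (𝓝[>] (0 : ℝ)) (𝓝 (-(1 - t) ^ 2)) := by
      have := (((hLtop.const_div_atTop (ν : ℝ)).add hNL).mul hlog).const_add (-(1 - t) ^ 2)
      simpa using this
    have h4 : -(1 - t) ^ 2 < 0 := by
      have : 0 < (1 - t) ^ 2 := pow_pos (by linarith) 2
      linarith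
    exact Real.tendsto_exp_atBot.comp (hLtop.atTop_mul_neg h4 h3)
  set q : ℝ → ℝ := fun α => e α + b (N α) with hq
  have hq0 : Tendsto q (𝓝[>] (0 : ℝ)) (𝓝 0) := by simpa using he0.add hb0
  have hmain : Tendsto (fun α => ((N α : ℝ) / L α * I) ^ ℓ * (1 - q α)) (𝓝[>] (0 : ℝ))
      (𝓝 (t ^ ℓ)) := by
    have h1 := ((hNL.mul_const I).rpow_const (p := ℓ) (Or.inr hℓ0.le)).mul (hq0.const_sub 1)
    rwa [div_mul_cancel₀ _ hI.ne', sub_zero, mul_one] at h1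
  filter_upwards [hmain.eventually (lt_mem_nhds htc), eventually_Ioo,
    hNtop.eventually_ge_atTop 1, hLtop.eventually_gt_atTop 0] with α hα hα01 hN1 hL0
  have hD : 0 < (|Real.log α| / I) ^ ℓ := Real.rpow_pos_of_pos (div_pos hL0 hI) _
  have hρ := hϱmem α hα01
  have h1ρ : 0 < 1 - ϱ α := by linarith [hρ.2]
  rw [ENNReal.le_div_iff_mul_le (Or.inl (by simpa using hD)) (Or.inl ENNReal.ofReal_ne_top),
    ← ENNReal.ofReal_mul' hD.le]
  refine le_iInf₂ fun τ hτ => ?_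
  refine le_trans ?_ (M.le_criskPow hℓ0.le ν (N α) hτ.1)
  have hprob := M.P_prob ν
  have hq_nonneg : 0 ≤ q α := add_nonneg (Real.exp_pos _).le ENNReal.toReal_nonneg
  have hA := hτ.1.2 (ν + N α)
  have hPA : M.P ν {ω | τ ω ≤ ((ν + N α : ℕ) : ℕ∞)} ≤ ENNReal.ofReal (q α) := by
    refine (M.P_le_exp_mul_add (k := ν) (by omega) hA ((2 - t) * I * N α)).trans ?_
    rw [hq]
    simp only
    rw [ENNReal.ofReal_add (Real.exp_pos _).le ENNReal.toReal_nonneg]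
    refine add_le_add ?_ ?_
    · refine (mul_le_mul' le_rfl (M.Pinf_le_of_mem_Delta hρ hτ (ν + N α))).trans ?_
      rw [← ENNReal.ofReal_mul (Real.exp_pos _).le]
      refine ENNReal.ofReal_le_ofReal ?_
      have hαe : α = Real.exp (-L α) := by
        rw [hL]
        simp only
        rw [abs_of_neg (Real.log_neg hα01.1 hα01.2), neg_neg, Real.exp_log hα01.1]
      have hpe : ((1 - ϱ α) ^ (ν + N α))⁻¹ =
          Real.exp (((ν : ℝ) + N α) * -Real.log (1 - ϱ α)) := by
        rw [mul_neg, Real.exp_neg, mul_comm, Real.exp_mul, Real.exp_log h1ρ, ← Nat.cast_add,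
          Real.rpow_natCast]
      rw [hpe]
      nth_rewrite 2 [hαe]
      rw [← Real.exp_add, ← Real.exp_add]
      refine Real.exp_le_exp.2 ?_
      have hfl : (N α : ℝ) ≤ t / I * L α := Nat.floor_le (by positivity)
      have hfl' : I * N α ≤ t * L α := by
        have := mul_le_mul_of_nonneg_left hfl hI.le
        have h2 : I * (t / I * L α) = t * L α := by field_simp
        linarith
      have h3 : L α * (-(1 - t) ^ 2 + ((ν : ℝ) / L α + N α / L α) * -Real.log (1 - ϱ α)) =
          -(1 - t) ^ 2 * L α + ((ν : ℝ) + N α) * -Real.log (1 - ϱ α) := by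
        have : L α ≠ 0 := hL0.ne'
        field_simp
      rw [h3]
      nlinarith
    · rw [ENNReal.ofReal_toReal (measure_ne_top _ _)]
      refine measure_mono fun ω hω => ?_
      have hω' : (2 - t) * I * N α < M.Z (ν + N α) ν ω := hω
      have hNpos : (0 : ℝ) < N α := by exact_mod_cast hN1
      rw [mem_ofPred_eq]
      refine lt_of_lt_of_le ?_ (le_abs_self _)
      rw [lt_sub_iff_add_lt, lt_div_iff₀ hNpos]
      nlinarith
  have hcompl := ofReal_one_sub_le (M.F_le _ _ hA) hq_nonneg hPA
  rw [compl_le_eq] at hcompl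
  refine le_trans ?_ (mul_le_mul' le_rfl hcompl)
  rw [← ENNReal.ofReal_natCast, ENNReal.ofReal_rpow_of_nonneg (Nat.cast_nonneg _) hℓ0.le,
    ← ENNReal.ofReal_mul (by positivity)]
  refine ENNReal.ofReal_le_ofReal ?_
  have hNe : (N α : ℝ) ^ ℓ = ((N α : ℝ) / L α * I) ^ ℓ * (|Real.log α| / I) ^ ℓ := by
    rw [← Real.mul_rpow (by positivity) (by positivity)]
    congr 1
    have : |Real.log α| ≠ 0 := hL0.ne'
    simp only [hL]
    field_simp
  rw [hNe]
  nlinarith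

/-- The delay of the Shiryaev–Roberts procedure is at most `(1+o(1)) |log α| / I` in the sense of
`ℓ`-th moments, uniformly over the change points `ν ≤ k*_α`. -/
lemma eventually_iSup_le {r I : ℝ} (hI : 0 < I) (hAr : M.CondAr r I)
    {ϱ : ℝ → ℝ} (hϱmem : ∀ α ∈ Set.Ioo (0 : ℝ) 1, ϱ α ∈ Set.Ioo (0 : ℝ) 1)
    (hϱlog : Tendsto (fun α : ℝ => |Real.log (ϱ α)| / |Real.log α|) (𝓝[>] (0 : ℝ)) (𝓝 0))
    {kstar : ℝ → ℕ}
    (hk2 : Tendsto (fun α : ℝ => |Real.log α| + (kstar α : ℝ) * Real.log (1 - ϱ α))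
      (𝓝[>] (0 : ℝ)) atTop)
    (hmem : ∀ᶠ α in 𝓝[>] (0 : ℝ), M.SR ((1 - α) / (ϱ α * α)) ∈ M.Delta α (ϱ α))
    {ℓ : ℝ} (hℓ : 1 ≤ ℓ) (hℓr : ℓ ≤ r) {c : ℝ} (hc : 1 < c) :
    ∀ᶠ α in 𝓝[>] (0 : ℝ),
      (⨆ ν ∈ Set.Iic (kstar α), M.criskPow ℓ ν (M.SR ((1 - α) / (ϱ α * α)))) /
        ENNReal.ofReal ((|Real.log α| / I) ^ ℓ) ≤ ENNReal.ofReal c := by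
  have hℓ0 : 0 < ℓ := by linarith
  obtain ⟨s, hsc, hs1⟩ : ∃ s : ℝ, s ^ ℓ < c ∧ 1 < s := by
    have h1 : Tendsto (fun t : ℝ => t ^ ℓ) (𝓝[>] 1) (𝓝 1) := by
      have := (Real.continuousAt_rpow_const 1 ℓ (Or.inr hℓ0.le)).tendsto
      rw [Real.one_rpow] at this
      exact this.mono_left nhdsWithin_le_nhds
    exact ((h1.eventually (gt_mem_nhds hc)).and self_mem_nhdsWithin).exists
  have hs0 : 0 < s := by linarith
  have hIs : I / s < I := div_lt_self hI hs1
  -- `ε` is chosen so that `I - ε = I / s`.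
  obtain ⟨C, hC0, hC⟩ := M.exists_riskPow_SR_le hAr hℓ hℓr (ε := I - I / s) (by linarith)
    (by linarith [div_pos hI hs0])
  set L : ℝ → ℝ := fun α => |Real.log α| with hL
  have hLtop : Tendsto L (𝓝[>] (0 : ℝ)) atTop := tendsto_abs_log
  set H : ℝ → ℝ := fun α => Real.log ((1 - α) / (ϱ α * α)) with hH
  have hHL : Tendsto (fun α => H α / L α) (𝓝[>] (0 : ℝ)) (𝓝 1) := by
    have hlog : Tendsto (fun α : ℝ => Real.log (1 - α)) (𝓝[>] (0 : ℝ)) (𝓝 0) := by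
      have h1 : Tendsto (fun α : ℝ => 1 - α) (𝓝[>] (0 : ℝ)) (𝓝 1) := by
        have : Tendsto (fun α : ℝ => α) (𝓝[>] (0 : ℝ)) (𝓝 0) :=
          tendsto_id.mono_left nhdsWithin_le_nhds
        simpa using this.const_sub 1
      have h2 := (Real.continuousAt_log one_ne_zero).tendsto.comp h1
      rwa [Real.log_one] at h2
    have h3 := ((hlog.div_atTop hLtop).add hϱlog).add_const 1
    simp only [zero_add] at h3
    refine h3.congr' ?_
    filter_upwards [eventually_Ioo, hLtop.eventually_gt_atTop 0] with α hα hL0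
    have hρ := hϱmem α hα
    have h1α : 0 < 1 - α := by linarith [hα.2]
    have e1 : H α = Real.log (1 - α) + |Real.log (ϱ α)| + L α := by
      simp only [hH, hL]
      rw [Real.log_div h1α.ne' (mul_pos hρ.1 hα.1).ne', Real.log_mul hρ.1.ne' hα.1.ne',
        abs_of_neg (Real.log_neg hρ.1 hρ.2), abs_of_neg (Real.log_neg hα.1 hα.2)]
      ring
    rw [e1, add_div, add_div, div_self hL0.ne']
  set p : ℝ → ℝ := fun α => Real.exp (-(L α + (kstar α : ℝ) * Real.log (1 - ϱ α))) with hp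
  have hp0 : Tendsto p (𝓝[>] (0 : ℝ)) (𝓝 0) :=
    Real.tendsto_exp_atBot.comp (tendsto_neg_atTop_atBot.comp hk2)
  have hmain : Tendsto (fun α => ((H α / L α * s + I / L α) ^ ℓ + C / (L α / I) ^ ℓ) / (1 - p α))
      (𝓝[>] (0 : ℝ)) (𝓝 (s ^ ℓ)) := by
    have h1 := ((hHL.mul_const s).add (hLtop.const_div_atTop I)).rpow_const (p := ℓ)
      (Or.inr hℓ0.le)
    have h2 : Tendsto (fun α => C / (L α / I) ^ ℓ) (𝓝[>] (0 : ℝ)) (𝓝 0) :=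
      ((tendsto_rpow_atTop hℓ0).comp (hLtop.atTop_div_const hI)).const_div_atTop C
    have h3 := (h1.add h2).div (hp0.const_sub 1) (by norm_num)
    simpa [Pi.div_def] using h3
  filter_upwards [hmain.eventually (gt_mem_nhds hsc), eventually_Ioo, hmem,
    hLtop.eventually_gt_atTop 0, hHL.eventually (lt_mem_nhds one_pos),
    hp0.eventually (gt_mem_nhds one_pos)] with α hα hα01 hSR hL0 hHL0 hp1
  have hD : 0 < (|Real.log α| / I) ^ ℓ := Real.rpow_pos_of_pos (div_pos hL0 hI) _
  have hρ := hϱmem α hα01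
  have h1ρ : 0 < 1 - ϱ α := by linarith [hρ.2]
  have hH0 : 0 < H α := by
    have := mul_pos hHL0 hL0
    rwa [div_mul_cancel₀ _ hL0.ne'] at this
  have h1p : 0 < 1 - p α := by linarith
  refine ENNReal.div_le_of_le_mul (iSup₂_le fun ν hν => ?_)
  have hν' : ν ≤ kstar α := hν
  have hprob := M.P_prob ν
  have hdet := hSR.1
  set T := M.SR ((1 - α) / (ϱ α * α)) with hT
  have hden : ENNReal.ofReal (1 - p α) ≤ M.P ν {ω | (ν : ℕ∞) < T ω} := by
    rw [← compl_le_eq]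
    refine ofReal_one_sub_le (M.F_le _ _ (hdet.2 ν)) (Real.exp_pos _).le ?_
    rw [M.P_eq_Pinf le_rfl (hdet.2 ν)]
    refine (M.Pinf_le_of_mem_Delta hρ hSR ν).trans (ENNReal.ofReal_le_ofReal ?_)
    have hpe : p α = α * ((1 - ϱ α) ^ kstar α)⁻¹ := by
      simp only [hp, hL]
      rw [abs_of_neg (Real.log_neg hα01.1 hα01.2), neg_add, neg_neg, Real.exp_add,
        Real.exp_log hα01.1, Real.exp_neg, mul_comm (kstar α : ℝ), Real.exp_mul,
        Real.exp_log h1ρ, Real.rpow_natCast]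
    rw [hpe]
    have := hα01.1
    have hpw : (1 - ϱ α) ^ kstar α ≤ (1 - ϱ α) ^ ν :=
      pow_le_pow_of_le_one h1ρ.le (by linarith [hρ.1]) hν'
    gcongr
  set x : ℝ := H α * s / I with hx
  have hx0 : 0 ≤ x := by positivity
  have hrisk : M.riskPow ℓ ν T ≤ ENNReal.ofReal ((x + 1) ^ ℓ + C) := by
    have hfl := Nat.floor_le hx0
    have hfl2 := Nat.lt_floor_add_one x
    refine (hC ((1 - α) / (ϱ α * α)) ⌊x⌋₊ ?_ ν).trans (ENNReal.ofReal_le_ofReal ?_)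
    · have h1 : H α = x * (I / s) := by rw [hx]; field_simp
      have h2 : x * (I / s) ≤ (⌊x⌋₊ + 1) * (I / s) :=
        mul_le_mul_of_nonneg_right hfl2.le (by positivity)
      have h3 : Real.log ((1 - α) / (ϱ α * α)) = H α := rfl
      rw [h3, _root_.sub_sub_cancel]
      linarith
    · gcongr
  unfold criskPow
  refine (ENNReal.div_le_div hrisk hden).trans ?_
  rw [← ENNReal.ofReal_div_of_pos h1p, ← ENNReal.ofReal_mul (by linarith)]
  refine ENNReal.ofReal_le_ofReal ?_
  have hxe : (x + 1) ^ ℓ = (H α / L α * s + I / L α) ^ ℓ * (|Real.log α| / I) ^ ℓ := by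
    rw [← Real.mul_rpow (by positivity) (by positivity)]
    congr 1
    have h1 : |Real.log α| ≠ 0 := hL0.ne'
    simp only [hx, hL]
    field_simp
  have hCe : C = C / (L α / I) ^ ℓ * (|Real.log α| / I) ^ ℓ :=
    (div_mul_cancel₀ _ hD.ne').symm
  rw [hxe]
  nth_rewrite 1 [hCe]
  rw [← add_mul, mul_div_right_comm]
  exact mul_le_mul_of_nonneg_right hα.le hD.le

end ChangePointModel

/-- Squeeze criterion in `ℝ≥0∞` with real comparison constants. -/
lemma tendsto_one_of_eventually {X : Type*} {f : Filter X} {u : X → ℝ≥0∞}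
    (hlow : ∀ c : ℝ, c < 1 → ∀ᶠ x in f, ENNReal.ofReal c ≤ u x)
    (hup : ∀ c : ℝ, 1 < c → ∀ᶠ x in f, u x ≤ ENNReal.ofReal c) :
    Tendsto u f (𝓝 1) := by
  rw [tendsto_order]
  constructor
  · intro a ha
    obtain ⟨b, hab, hb1⟩ := exists_between ha
    have hb : b ≠ ⊤ := (hb1.trans ENNReal.one_lt_top).ne
    have hb1' : b.toReal < 1 := by
      rwa [← ENNReal.toReal_one, ENNReal.toReal_lt_toReal hb ENNReal.one_ne_top]
    filter_upwards [hlow b.toReal hb1'] with x hx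
    rw [ENNReal.ofReal_toReal hb] at hx
    exact hab.trans_le hx
  · intro a ha
    obtain ⟨b, hb1, hba⟩ := exists_between ha
    have hb : b ≠ ⊤ := (hba.trans_le le_top).ne
    have hb1' : 1 < b.toReal := by
      rwa [← ENNReal.toReal_one, ENNReal.toReal_lt_toReal ENNReal.one_ne_top hb]
    filter_upwards [hup b.toReal hb1'] with x hx
    rw [ENNReal.ofReal_toReal hb] at hx
    exact hx.trans_lt hba

/-- Under uniform `r`-complete convergence (`r > 1`), `ϱ_α → 0`,
`|log ϱ_α|/|log α| → 0`, `k*_α → ∞` and `|log α| + k*_α log(1-ϱ_α) → +∞`, the SR procedure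
`T_α` is asymptotically optimal in `Δ(α) = Δ(α,ϱ_α)` with respect to all conditional moments
of the detection delay of orders `1 ≤ ℓ ≤ r`, pointwise in `ν` and maximally over
`0 ≤ ν ≤ k*_α`, all quantities being equivalent to `(|log α|/I)^ℓ` as `α → 0`. -/
theorem statement4
    {Ω : Type} [m0 : MeasurableSpace Ω] (M : ChangePointModel Ω)
    (r I : ℝ) (hr : 1 < r) (hI : 0 < I) (hAr : M.CondAr r I)
    (ϱ : ℝ → ℝ) (hϱmem : ∀ α ∈ Set.Ioo (0 : ℝ) 1, ϱ α ∈ Set.Ioo (0 : ℝ) 1)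
    (hϱ0 : Tendsto ϱ (𝓝[>] (0 : ℝ)) (𝓝 0))
    (hϱlog : Tendsto (fun α : ℝ => |Real.log (ϱ α)| / |Real.log α|) (𝓝[>] (0 : ℝ)) (𝓝 0))
    (kstar : ℝ → ℕ)
    (hk1 : Tendsto kstar (𝓝[>] (0 : ℝ)) atTop)
    (hk2 : Tendsto (fun α : ℝ => |Real.log α| + (kstar α : ℝ) * Real.log (1 - ϱ α))
      (𝓝[>] (0 : ℝ)) atTop) :
    ∀ ℓ : ℝ, 1 ≤ ℓ → ℓ ≤ r →
      (∀ ν : ℕ,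
        Tendsto (fun α : ℝ =>
          M.criskPow ℓ ν (M.SR ((1 - α) / (ϱ α * α)))
            / ENNReal.ofReal ((|Real.log α| / I) ^ ℓ))
          (𝓝[>] (0 : ℝ)) (𝓝 1)) ∧
      (∀ ν : ℕ,
        Tendsto (fun α : ℝ =>
          (⨅ τ ∈ M.Delta α (ϱ α), M.criskPow ℓ ν τ)
            / ENNReal.ofReal ((|Real.log α| / I) ^ ℓ))
          (𝓝[>] (0 : ℝ)) (𝓝 1)) ∧
      (Tendsto (fun α : ℝ =>
          (⨆ ν ∈ Set.Iic (kstar α), M.criskPow ℓ ν (M.SR ((1 - α) / (ϱ α * α))))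
            / ENNReal.ofReal ((|Real.log α| / I) ^ ℓ))
          (𝓝[>] (0 : ℝ)) (𝓝 1)) ∧
      (Tendsto (fun α : ℝ =>
          (⨅ τ ∈ M.Delta α (ϱ α), ⨆ ν ∈ Set.Iic (kstar α), M.criskPow ℓ ν τ)
            / ENNReal.ofReal ((|Real.log α| / I) ^ ℓ))
          (𝓝[>] (0 : ℝ)) (𝓝 1)) := by
  intro ℓ hℓ hℓr
  -- `|log ϱ_α| / |log α| < 1` eventually, i.e. `α < ϱ_α`.
  have hmem : ∀ᶠ α in 𝓝[>] (0 : ℝ), M.SR ((1 - α) / (ϱ α * α)) ∈ M.Delta α (ϱ α) := by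
    filter_upwards [hϱlog.eventually (gt_mem_nhds one_pos), ChangePointModel.eventually_Ioo]
      with α h1 hα
    have hρ := hϱmem α hα
    refine M.SR_mem_Delta hα hρ ?_
    have hl := Real.log_neg hα.1 hα.2
    rw [abs_of_neg hl, abs_of_neg (Real.log_neg hρ.1 hρ.2), div_lt_one (by linarith),
      neg_lt_neg_iff] at h1
    exact ((Real.log_lt_log_iff hα.1 hρ.1).1 h1).le
  have hlow := fun (ν : ℕ) (c : ℝ) (hc : c < 1) =>
    M.eventually_le_iInf hr hI hAr hϱmem hϱ0 hℓ ν hc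
  have hup := fun (c : ℝ) (hc : 1 < c) =>
    M.eventually_iSup_le hI hAr hϱmem hϱlog hk2 hmem hℓ hℓr hc
  refine ⟨fun ν => ?_, fun ν => ?_, ?_, ?_⟩
  · refine tendsto_one_of_eventually (fun c hc => ?_) fun c hc => ?_
    · filter_upwards [hlow ν c hc, hmem] with α h1 h2
      exact h1.trans (ENNReal.div_le_div_right (iInf₂_le _ h2) _)
    · filter_upwards [hup c hc, hk1.eventually_ge_atTop ν] with α h1 h2
      exact (ENNReal.div_le_div_right (le_iSup₂ (f := fun ν (_ : ν ∈ Set.Iic (kstar α)) =>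
        M.criskPow ℓ ν (M.SR ((1 - α) / (ϱ α * α)))) ν h2) _).trans h1
  · refine tendsto_one_of_eventually (hlow ν) fun c hc => ?_
    filter_upwards [hup c hc, hmem, hk1.eventually_ge_atTop ν] with α h1 h2 h3
    refine le_trans (ENNReal.div_le_div_right ((iInf₂_le _ h2).trans ?_) _) h1
    exact le_iSup₂ (f := fun ν (_ : ν ∈ Set.Iic (kstar α)) =>
        M.criskPow ℓ ν (M.SR ((1 - α) / (ϱ α * α)))) ν h3
  · refine tendsto_one_of_eventually (fun c hc => ?_) hup
    filter_upwards [hlow 0 c hc, hmem] with α h1 h2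
    refine h1.trans (ENNReal.div_le_div_right ((iInf₂_le _ h2).trans ?_) _)
    exact le_iSup₂ (f := fun ν (_ : ν ∈ Set.Iic (kstar α)) =>
        M.criskPow ℓ ν (M.SR ((1 - α) / (ϱ α * α)))) 0 (Nat.zero_le _)
  · refine tendsto_one_of_eventually (fun c hc => ?_) fun c hc => ?_
    · filter_upwards [hlow 0 c hc] with α h1
      refine h1.trans (ENNReal.div_le_div_right (le_iInf₂ fun τ hτ => ?_) _)
      refine (iInf₂_le τ hτ).trans ?_
      exact le_iSup₂ (f := fun ν (_ : ν ∈ Set.Iic (kstar α)) => M.criskPow ℓ ν τ) 0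
        (Nat.zero_le _)
    · filter_upwards [hup c hc, hmem] with α h1 h2
      exact le_trans (ENNReal.div_le_div_right (iInf₂_le _ h2) _) h1
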